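/- Assume the monomial Simon conjecture: every monomial ideal of S generated in a single degree d with linear quotients can be extended to m^d by linear quotients. Then for any monomial ideal I ⊂ S generated in a single degree and having linear quotients, one has α(I) − 1 ≤ v(I) ≤ α(I). -/

import Mathlib

open MvPolynomial

noncomputable section

variable (K : Type*) [Field K]

/-- The set of associated primes of `S/I`. -/
def assPrimes {σ : Type*} (I : Ideal (MvPolynomial σ K)) : Set (Ideal (MvPolynomial σ K)) :=
  associatedPrimes (MvPolynomial σ K) (MvPolynomial σ K ⧸ I)

/-- The v-number of `I` at a prime `p`:
`min {d : ∃ homogeneous f of degree d with (I : f) = p}`. -/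
def vNumberAt {σ : Type*} (I p : Ideal (MvPolynomial σ K)) : ℕ :=
  sInf {d | ∃ f : MvPolynomial σ K, f.IsHomogeneous d ∧ I.colon (Ideal.span {f}) = p}

/-- The v-number of `I`:
`min {d : ∃ homogeneous f of degree d with (I : f) ∈ Ass(I)}`. -/
def vNumber {σ : Type*} (I : Ideal (MvPolynomial σ K)) : ℕ :=
  sInf {d | ∃ f : MvPolynomial σ K, f.IsHomogeneous d ∧
    I.colon (Ideal.span {f}) ∈ assPrimes K I}

/-- The initial degree `α(I) = min {d : I_d ≠ 0}`. -/
def initialDegree {σ : Type*} (I : Ideal (MvPolynomial σ K)) : ℕ :=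
  sInf {d | ∃ f ∈ I, f ≠ 0 ∧ f.IsHomogeneous d}

/-- The monomial with exponent vector `m`. -/
def mon {σ : Type*} (m : σ →₀ ℕ) : MvPolynomial σ K := monomial m 1

/-- The degree of an exponent vector. -/
def mdeg {σ : Type*} (m : σ →₀ ℕ) : ℕ := m.sum fun _ e => e

/-- `U` is the minimal monomial generating set `G(I)` of the monomial ideal `I`. -/
def MinimalGens {σ : Type*} [DecidableEq σ] (I : Ideal (MvPolynomial σ K))
    (U : Finset (σ →₀ ℕ)) : Prop :=
  I = Ideal.span (mon K '' (U : Set (σ →₀ ℕ))) ∧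
    ∀ m ∈ U, mon K m ∉ Ideal.span (mon K '' ((U.erase m : Finset (σ →₀ ℕ)) : Set (σ →₀ ℕ)))

/-- An ideal generated by (a subset of the) variables. -/
def GenByVars {σ : Type*} (J : Ideal (MvPolynomial σ K)) : Prop :=
  ∃ B : Set σ, J = Ideal.span ((fun i => (X i : MvPolynomial σ K)) '' B)

/-- The monomial ideal `I` has linear quotients: its minimal monomial generating set can be
ordered `u_1, …, u_m` so that `(u_1, …, u_{j-1}) : u_j` is generated by variables for
`j = 2, …, m`. -/
def HasLinearQuotients {σ : Type*} [DecidableEq σ] (I : Ideal (MvPolynomial σ K)) : Prop :=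
  ∃ L : List (σ →₀ ℕ), L.Nodup ∧ MinimalGens K I L.toFinset ∧
    ∀ (j : ℕ) (hj : j < L.length), 0 < j →
      GenByVars K ((Ideal.span (mon K '' {m | m ∈ L.take j})).colon
        (Ideal.span {mon K (L.get ⟨j, hj⟩)}))

/-- The monomial ideal `I` can be extended by linear quotients by the set `V` of new
monomial generators (`V = G(J) \ G(I)`): `V` can be ordered `v_1, …, v_r` so that
`(I, v_1, …, v_{j-1}) : v_j` is generated by variables for all `j = 1, …, r`. -/
def ExtendsByLinQuots {σ : Type*} (I : Ideal (MvPolynomial σ K)) (V : Set (σ →₀ ℕ)) : Prop :=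
  ∃ L : List (σ →₀ ℕ), L.Nodup ∧ {m | m ∈ L} = V ∧
    ∀ (j : ℕ) (hj : j < L.length),
      GenByVars K ((I ⊔ Ideal.span (mon K '' {m | m ∈ L.take j})).colon
        (Ideal.span {mon K (L.get ⟨j, hj⟩)}))

/-! A prime `I : f` contains every monomial of the monomial ideal `I`, hence a variable `x_i` if
`I ≠ 0`; then `x_i f` is a nonzero element of `I` of degree `deg f + 1`, which is the lower bound.
For the upper bound, let `I` be generated in degree `d` and let `v` be the first monomial added in
an extension of `I` to `m ^ d` by linear quotients: `I : v` is generated by variables, hence prime,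
and `v` has degree `d`. If nothing has to be added, then `I = m ^ d`, and `m ^ d : w = m` for every
monomial `w` of degree `d - 1`. -/

theorem colon_mem_associatedPrimes {R : Type*} [CommRing R] {I : Ideal R} {x : R}
    (h : (I.colon (Ideal.span {x})).IsPrime) :
    I.colon (Ideal.span {x}) ∈ associatedPrimes R (R ⧸ I) := by
  refine ⟨h, Ideal.Quotient.mk I x, ?_⟩
  have hcolon : (⊥ : Submodule R (R ⧸ I)).colon {Ideal.Quotient.mk I x} =
      I.colon (Ideal.span {x}) := by
    ext r
    rw [Submodule.mem_colon_singleton, Ideal.mem_colon_span_singleton, Submodule.mem_bot,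
      Algebra.smul_def, Ideal.Quotient.algebraMap_eq, ← map_mul, Ideal.Quotient.eq_zero_iff_mem]
  rw [hcolon, h.radical]

section Monomials

variable {σ R : Type*}

theorem exists_X_mem_of_monomial_mem [CommSemiring R] {P : Ideal (MvPolynomial σ R)}
    (hP : P.IsPrime) {m : σ →₀ ℕ} (hm : monomial m 1 ∈ P) :
    ∃ i, (X i : MvPolynomial σ R) ∈ P := by
  rw [monomial_eq, C_1, one_mul, Finsupp.prod] at hm
  obtain ⟨i, -, hi⟩ := hP.prod_mem_iff.1 hm
  exact ⟨i, hP.mem_of_pow_mem _ hi⟩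

theorem le_of_isHomogeneous_of_mem_span_monomial [CommSemiring R] {U : Set (σ →₀ ℕ)} {d e : ℕ}
    (hU : ∀ m ∈ U, d ≤ m.degree) {f : MvPolynomial σ R}
    (hf : f ∈ Ideal.span ((fun m ↦ monomial m (1 : R)) '' U)) (hf0 : f ≠ 0)
    (hfe : f.IsHomogeneous e) : d ≤ e := by
  obtain ⟨m, hm⟩ := support_nonempty.2 hf0
  obtain ⟨u, hu, hum⟩ := mem_ideal_span_monomial_image.1 hf m hm
  calc d ≤ u.degree := hU u hu
    _ ≤ m.degree := Finsupp.degree_mono hum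
    _ = e := (hfe.degree_eq_sum_deg_support hm).symm

theorem span_X_image_eq_ker [CommRing R] (B : Set σ) [DecidablePred (· ∈ B)] :
    Ideal.span ((fun i ↦ (X i : MvPolynomial σ R)) '' B) =
      RingHom.ker (aeval fun i ↦ if i ∈ B then 0 else (X i : MvPolynomial σ R)) := by
  set J := Ideal.span ((fun i ↦ (X i : MvPolynomial σ R)) '' B)
  set φ : MvPolynomial σ R →ₐ[R] MvPolynomial σ R := aeval fun i ↦ if i ∈ B then 0 else X i
  have hX : ∀ i ∈ B, (X i : MvPolynomial σ R) ∈ J := fun i hi ↦ Ideal.subset_span ⟨i, hi, rfl⟩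
  refine le_antisymm (Ideal.span_le.2 ?_) fun p hp ↦ ?_
  · rintro _ ⟨i, hi, rfl⟩
    simp [φ, hi]
  · have mk_comp : (Ideal.Quotient.mkₐ R J).comp φ = Ideal.Quotient.mkₐ R J := by
      ext i
      by_cases hi : i ∈ B
      · simp [φ, hi, Ideal.Quotient.eq_zero_iff_mem.2 (hX i hi)]
      · simp [φ, hi]
    rw [← Ideal.Quotient.eq_zero_iff_mem]
    calc Ideal.Quotient.mk J p = Ideal.Quotient.mk J (φ p) := (DFunLike.congr_fun mk_comp p).symm
      _ = 0 := by rw [RingHom.mem_ker.1 hp, map_zero]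

theorem isPrime_span_X_image [CommRing R] [IsDomain R] (B : Set σ) :
    (Ideal.span ((fun i ↦ (X i : MvPolynomial σ R)) '' B)).IsPrime := by
  classical
  rw [span_X_image_eq_ker]
  exact RingHom.ker_isPrime _

theorem idealOfVars_pow_colon_monomial [CommSemiring R] (w : σ →₀ ℕ) :
    (idealOfVars σ R ^ (w.degree + 1)).colon (Ideal.span {monomial w (1 : R)}) =
      idealOfVars σ R := by
  ext g
  rw [Ideal.mem_colon_span_singleton]
  constructor <;> intro hg
  · have hg0 : coeff 0 g = 0 := by
      have := (mem_pow_idealOfVars_iff' _ _).1 hg w w.degree.lt_succ_self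
      simpa [coeff_mul_monomial'] using this
    rw [← pow_one (idealOfVars σ R), mem_pow_idealOfVars_iff']
    intro m hm
    rwa [(Finsupp.degree_eq_zero_iff m).1 (Nat.lt_one_iff.1 hm)]
  · have hw : monomial w (1 : R) ∈ idealOfVars σ R ^ w.degree := by
      rw [pow_idealOfVars_eq_span]
      exact Ideal.subset_span ⟨w, rfl, rfl⟩
    rw [pow_succ']
    exact Ideal.mul_mem_mul hg hw

theorem exists_isPrime_idealOfVars_pow_colon [CommRing R] [IsDomain R] [Nonempty σ] (e : ℕ) :
    ∃ f : MvPolynomial σ R, f.IsHomogeneous e ∧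
      ((idealOfVars σ R ^ (e + 1)).colon (Ideal.span {f})).IsPrime := by
  obtain ⟨i⟩ := ‹Nonempty σ›
  have hdeg : (Finsupp.single i e).degree = e := Finsupp.degree_single i e
  refine ⟨monomial (Finsupp.single i e) 1, isHomogeneous_monomial 1 hdeg, ?_⟩
  have hcolon := idealOfVars_pow_colon_monomial (R := R) (Finsupp.single i e)
  rw [hdeg] at hcolon
  rw [hcolon, idealOfVars, ← Set.image_univ]
  exact isPrime_span_X_image Set.univ

end Monomials

section VNumber

variable {K} {σ : Type*}

theorem isHomogeneous_mon (m : σ →₀ ℕ) : (mon K m).IsHomogeneous (mdeg m) :=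
  isHomogeneous_monomial _ rfl

theorem GenByVars.isPrime {J : Ideal (MvPolynomial σ K)} (h : GenByVars K J) : J.IsPrime := by
  obtain ⟨B, rfl⟩ := h
  exact isPrime_span_X_image B

theorem initialDegree_le {I : Ideal (MvPolynomial σ K)} {f : MvPolynomial σ K} {e : ℕ}
    (hf : f ∈ I) (hf0 : f ≠ 0) (hfe : f.IsHomogeneous e) : initialDegree K I ≤ e :=
  Nat.sInf_le ⟨f, hf, hf0, hfe⟩

theorem initialDegree_bot : initialDegree K (⊥ : Ideal (MvPolynomial σ K)) = 0 := by
  simp [initialDegree]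

theorem initialDegree_top : initialDegree K (⊤ : Ideal (MvPolynomial σ K)) = 0 :=
  Nat.le_zero.1 <| initialDegree_le Submodule.mem_top one_ne_zero (isHomogeneous_one σ K)

theorem initialDegree_span_mon {U : Set (σ →₀ ℕ)} {d : ℕ} (hU : ∀ m ∈ U, mdeg m = d)
    (hne : U.Nonempty) : initialDegree K (Ideal.span (mon K '' U)) = d := by
  obtain ⟨u, hu⟩ := hne
  have hd : d ∈ {e | ∃ f ∈ Ideal.span (mon K '' U), f ≠ 0 ∧ f.IsHomogeneous e} :=
    ⟨mon K u, Ideal.subset_span ⟨u, hu, rfl⟩, by simp [mon], hU u hu ▸ isHomogeneous_mon u⟩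
  refine le_antisymm (Nat.sInf_le hd) (le_csInf ⟨d, hd⟩ ?_)
  rintro e ⟨f, hf, hf0, hfe⟩
  exact le_of_isHomogeneous_of_mem_span_monomial (fun m hm ↦ (hU m hm).ge) hf hf0 hfe

theorem initialDegree_le_of_isPrime_colon {U : Set (σ →₀ ℕ)} {f : MvPolynomial σ K} {e : ℕ}
    (hf : f.IsHomogeneous e)
    (hP : ((Ideal.span (mon K '' U)).colon (Ideal.span {f})).IsPrime) :
    initialDegree K (Ideal.span (mon K '' U)) ≤ e + 1 := by
  rcases U.eq_empty_or_nonempty with rfl | ⟨u, hu⟩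
  · simp [initialDegree_bot]
  have hf0 : f ≠ 0 := by
    rintro rfl
    exact hP.ne_top (by simp)
  have hu_mem : mon K u ∈ (Ideal.span (mon K '' U)).colon (Ideal.span {f}) :=
    Ideal.le_colon (Ideal.subset_span ⟨u, hu, rfl⟩)
  obtain ⟨i, hi⟩ := exists_X_mem_of_monomial_mem hP hu_mem
  rw [add_comm]
  exact initialDegree_le (Ideal.mem_colon_span_singleton.1 hi) (mul_ne_zero (X_ne_zero i) hf0)
    ((isHomogeneous_X K i).mul hf)

theorem vNumber_top : vNumber K (⊤ : Ideal (MvPolynomial σ K)) = 0 := by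
  have hset : {e | ∃ f : MvPolynomial σ K, f.IsHomogeneous e ∧
      (⊤ : Ideal (MvPolynomial σ K)).colon (Ideal.span {f}) ∈ assPrimes K ⊤} = ∅ :=
    Set.eq_empty_of_forall_notMem fun _ ⟨_, _, hP⟩ ↦ hP.1.ne_top Submodule.top_colon
  rw [vNumber, hset, Nat.sInf_empty]

theorem vNumber_le {I : Ideal (MvPolynomial σ K)} {f : MvPolynomial σ K} {e : ℕ}
    (hf : f.IsHomogeneous e) (hP : (I.colon (Ideal.span {f})).IsPrime) : vNumber K I ≤ e :=
  Nat.sInf_le ⟨f, hf, colon_mem_associatedPrimes hP⟩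

theorem initialDegree_le_vNumber_add_one {U : Set (σ →₀ ℕ)}
    (h : ∃ (e : ℕ) (f : MvPolynomial σ K), f.IsHomogeneous e ∧
      ((Ideal.span (mon K '' U)).colon (Ideal.span {f})).IsPrime) :
    initialDegree K (Ideal.span (mon K '' U)) ≤ vNumber K (Ideal.span (mon K '' U)) + 1 := by
  obtain ⟨e, f, hf, hP⟩ := h
  obtain ⟨g, hg, hgP⟩ := Nat.sInf_mem (s := {e | ∃ f : MvPolynomial σ K, f.IsHomogeneous e ∧
    (Ideal.span (mon K '' U)).colon (Ideal.span {f}) ∈ assPrimes K (Ideal.span (mon K '' U))})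
    ⟨e, f, hf, colon_mem_associatedPrimes hP⟩
  exact initialDegree_le_of_isPrime_colon hg hgP.1

theorem ExtendsByLinQuots.exists_isPrime_colon {I : Ideal (MvPolynomial σ K)}
    {V : Set (σ →₀ ℕ)} (h : ExtendsByLinQuots K I V) (hV : V.Nonempty) :
    ∃ v ∈ V, (I.colon (Ideal.span {mon K v})).IsPrime := by
  obtain ⟨L, -, rfl, hL⟩ := h
  have hpos : 0 < L.length := List.length_pos_iff_exists_mem.2 hV
  refine ⟨L.get ⟨0, hpos⟩, List.get_mem .., GenByVars.isPrime ?_⟩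
  simpa using hL 0 hpos

theorem exists_isPrime_colon_span_mon_of_forall_mem_iff {U : Set (σ →₀ ℕ)} {d : ℕ}
    (hU : ∀ m, m ∈ U ↔ mdeg m = d) (hne : U.Nonempty) (htop : Ideal.span (mon K '' U) ≠ ⊤) :
    ∃ e ≤ d, ∃ f : MvPolynomial σ K, f.IsHomogeneous e ∧
      ((Ideal.span (mon K '' U)).colon (Ideal.span {f})).IsPrime := by
  have hpow : Ideal.span (mon K '' U) = idealOfVars σ K ^ d := by
    rw [Set.ext hU, pow_idealOfVars_eq_span]
    rfl
  rw [hpow] at htop ⊢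
  obtain ⟨u, hu⟩ := hne
  cases d with
  | zero => simp at htop
  | succ e =>
    have hu0 : u ≠ 0 := by
      rintro rfl
      simpa [mdeg] using (hU 0).1 hu
    obtain ⟨i, -⟩ := Finsupp.support_nonempty_iff.2 hu0
    have : Nonempty σ := ⟨i⟩
    exact ⟨e, e.le_succ, exists_isPrime_idealOfVars_pow_colon e⟩

theorem ExtendsByLinQuots.exists_isPrime_colon_le_initialDegree {U : Set (σ →₀ ℕ)} {d : ℕ}
    (h : ExtendsByLinQuots K (Ideal.span (mon K '' U)) ({m | mdeg m = d} \ U))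
    (hU : ∀ m ∈ U, mdeg m = d) (htop : Ideal.span (mon K '' U) ≠ ⊤) :
    ∃ e ≤ initialDegree K (Ideal.span (mon K '' U)), ∃ f : MvPolynomial σ K,
      f.IsHomogeneous e ∧ ((Ideal.span (mon K '' U)).colon (Ideal.span {f})).IsPrime := by
  rcases U.eq_empty_or_nonempty with rfl | hne
  · refine ⟨0, Nat.zero_le _, 1, isHomogeneous_one σ K, ?_⟩
    simpa using Ideal.isPrime_bot
  rw [initialDegree_span_mon hU hne]
  rcases ({m | mdeg m = d} \ U).eq_empty_or_nonempty with hV | hV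
  · exact exists_isPrime_colon_span_mon_of_forall_mem_iff
      (fun m ↦ ⟨hU m, fun hm ↦ Set.sdiff_eq_empty.1 hV hm⟩) hne htop
  · obtain ⟨v, hv, hP⟩ := h.exists_isPrime_colon hV
    exact ⟨d, le_rfl, mon K v, hv.1 ▸ isHomogeneous_mon v, hP⟩

theorem stmt6_general {I : Ideal (MvPolynomial σ K)} {U : Set (σ →₀ ℕ)} {d : ℕ}
    (hI : I = Ideal.span (mon K '' U)) (hU : ∀ m ∈ U, mdeg m = d)
    (hE : ExtendsByLinQuots K I ({m | mdeg m = d} \ U)) :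
    initialDegree K I - 1 ≤ vNumber K I ∧ vNumber K I ≤ initialDegree K I := by
  subst hI
  by_cases htop : Ideal.span (mon K '' U) = ⊤
  · simp [htop, initialDegree_top, vNumber_top]
  obtain ⟨e, he, f, hf, hP⟩ := hE.exists_isPrime_colon_le_initialDegree hU htop
  exact ⟨Nat.sub_le_of_le_add (initialDegree_le_vNumber_add_one ⟨e, f, hf, hP⟩),
    (vNumber_le hf hP).trans he⟩

end VNumber

/-- Assuming the monomial Simon conjecture, every equigenerated monomial ideal `I` with
linear quotients satisfies `α(I) - 1 ≤ v(I) ≤ α(I)`. -/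
theorem stmt6 {n : ℕ}
    (hSimon : ∀ (d : ℕ) (J : Ideal (MvPolynomial (Fin n) K)) (V : Finset (Fin n →₀ ℕ)),
      MinimalGens K J V → (∀ m ∈ V, mdeg m = d) → HasLinearQuotients K J →
      ExtendsByLinQuots K J ({m : Fin n →₀ ℕ | mdeg m = d} \ (V : Set (Fin n →₀ ℕ))))
    (I : Ideal (MvPolynomial (Fin n) K)) (U : Finset (Fin n →₀ ℕ)) (d : ℕ)
    (hU : MinimalGens K I U) (hd : ∀ m ∈ U, mdeg m = d)
    (hlq : HasLinearQuotients K I) :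
    initialDegree K I - 1 ≤ vNumber K I ∧ vNumber K I ≤ initialDegree K I :=
  stmt6_general hU.1 hd (hSimon d I U hU hd hlq)

end
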